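/- arXiv:1302.0084 — 4 statements merged into one kernel-verified Lean document; each statement's English description precedes it below -/
import Mathlib

section
/- For any A, P > 0, with θ = A/√P, φ the standard normal density, Q(x) = ∫_x^∞ φ(y) dy, and h(p) = −p ln p − (1−p) ln(1−p) the binary entropy function (natural log), assume 2Q(θ) < 1. Then the amplitude-constrained AWGN capacity satisfies the non-asymptotic achievability bound: (1/2) ln(1+P) − C(A,P) ≤ (1/(1 − 2Q(θ))) · [ Q(θ) · ln( 1 + (A√P/(1+P)) · (φ(θ)/Q(θ)) ) + h(2Q(θ)) ]. -/
open MeasureTheory ProbabilityTheory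

open scoped Classical in
/-- Kullback–Leibler divergence (natural logarithm), valued in `EReal`:
`D(μ‖ν) = ∫ log(dμ/dν) dμ` if `μ ≪ ν` and the log-likelihood ratio is integrable,
and `+∞` otherwise. -/
noncomputable def klDiv {α : Type*} [MeasurableSpace α] (μ ν : Measure α) : EReal :=
  if μ ≪ ν ∧ Integrable (llr μ ν) μ then ((∫ x, llr μ ν x ∂μ : ℝ) : EReal) else ⊤

/-- The joint law of `(X, X+Z)` where `X ~ μ` and `Z ~ N(0,1)` is independent of `X`. -/
noncomputable def jointLaw (μ : Measure ℝ) : Measure (ℝ × ℝ) :=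
  (μ.prod (gaussianReal 0 1)).map fun p => (p.1, p.1 + p.2)

/-- The mutual information `I(X; X+Z)` for `X ~ μ` and `Z ~ N(0,1)` independent of `X`:
the KL divergence between the joint law of `(X, X+Z)` and the product of its marginals. -/
noncomputable def mutInfo (μ : Measure ℝ) : EReal :=
  klDiv (jointLaw μ) ((jointLaw μ).fst.prod (jointLaw μ).snd)

/-- The amplitude-constrained AWGN capacity `C(A,P)`: the supremum of `I(X; X+Z)` over laws of
real random variables `X` with `|X| ≤ A` almost surely and `E[X²] ≤ P`, with `Z ~ N(0,1)`
independent of `X`. -/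
noncomputable def CAP (A P : ℝ) : EReal :=
  ⨆ μ ∈ {μ : Measure ℝ | IsProbabilityMeasure μ ∧ μ {x | A < |x|} = 0 ∧ ∫ x, x ^ 2 ∂μ ≤ P},
    mutInfo μ

/-- The standard normal density `φ(y) = e^{-y²/2}/√(2π)`. -/
noncomputable def stdPhi (y : ℝ) : ℝ := Real.exp (-(y ^ 2) / 2) / Real.sqrt (2 * Real.pi)

/-- The standard normal tail function `Q(x) = ∫_x^∞ φ(y) dy`. -/
noncomputable def gaussQ (x : ℝ) : ℝ := ∫ y in Set.Ioi x, stdPhi y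

/-- The binary entropy function (natural logarithm). -/
noncomputable def binEnt (p : ℝ) : ℝ := -(p * Real.log p) - (1 - p) * Real.log (1 - p)


/-- density of `X + Z` with `X ~ ν` -/
noncomputable def outDens (ν : Measure ℝ) (y : ℝ) : ENNReal := ∫⁻ x, gaussianPDF x 1 y ∂ν

lemma meas_pdf_uncurry : Measurable (fun p : ℝ × ℝ => gaussianPDF p.1 1 p.2) := by
  have : Measurable (fun p : ℝ × ℝ => (p.1, (1 : NNReal), p.2)) := by fun_prop
  exact measurable_uncurry_gaussianPDF.comp this

lemma meas_pdf_left (y : ℝ) : Measurable (fun x : ℝ => gaussianPDF x 1 y) := by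
  unfold gaussianPDF gaussianPDFReal
  fun_prop

lemma measurable_outDens (ν : Measure ℝ) [SFinite ν] : Measurable (outDens ν) :=
  Measurable.lintegral_prod_left' meas_pdf_uncurry

lemma jointLaw_eq (ν : Measure ℝ) [SFinite ν] :
    jointLaw ν = (ν.prod volume).withDensity (fun p => gaussianPDF p.1 1 p.2) := by
  refine Measure.ext_of_lintegral _ fun f hf => ?_
  unfold jointLaw
  rw [lintegral_map hf (by fun_prop), lintegral_withDensity_eq_lintegral_mul _ meas_pdf_uncurry hf,
    lintegral_prod _ (by fun_prop), lintegral_prod _ (by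
      exact (meas_pdf_uncurry.mul hf).aemeasurable)]
  congr 1 with x
  have h : (gaussianReal 0 1).map (x + ·) = volume.withDensity (gaussianPDF x 1) := by
    rw [gaussianReal_map_const_add, zero_add, gaussianReal_of_var_ne_zero _ one_ne_zero]
  have h2 : ∫⁻ z, f (x, x + z) ∂(gaussianReal 0 1)
      = ∫⁻ y, f (x, y) ∂((gaussianReal 0 1).map (x + ·)) := by
    rw [lintegral_map (by fun_prop) (by fun_prop)]
  rw [h2, h, lintegral_withDensity_eq_lintegral_mul _ (measurable_gaussianPDF x 1) (by fun_prop)]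
  rfl

lemma jointLaw_snd (ν : Measure ℝ) [SFinite ν] :
    (jointLaw ν).snd = volume.withDensity (outDens ν) := by
  rw [jointLaw_eq]
  refine Measure.ext_of_lintegral _ fun f hf => ?_
  have hfm : Measurable (fun p : ℝ × ℝ => gaussianPDF p.1 1 p.2 * f p.2) :=
    meas_pdf_uncurry.mul (hf.comp measurable_snd)
  have e1 : ∫⁻ a, f a ∂((ν.prod volume).withDensity (fun p => gaussianPDF p.1 1 p.2)).snd
      = ∫⁻ p, gaussianPDF p.1 1 p.2 * f p.2 ∂(ν.prod volume) := by
    rw [Measure.snd, lintegral_map hf measurable_snd]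
    exact lintegral_withDensity_eq_lintegral_mul _ meas_pdf_uncurry (hf.comp measurable_snd)
  rw [e1, lintegral_prod_symm _ hfm.aemeasurable,
    lintegral_withDensity_eq_lintegral_mul _ (measurable_outDens ν) hf]
  refine lintegral_congr fun y => ?_
  have hy : Measurable (fun x : ℝ => gaussianPDF x 1 y) := meas_pdf_left y
  simp only [Pi.mul_apply, outDens]
  rw [lintegral_mul_const _ hy]

lemma conv_eq (ν : Measure ℝ) [SFinite ν] :
    (ν.prod (gaussianReal 0 1)).map (fun p => p.1 + p.2) = volume.withDensity (outDens ν) := by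
  rw [← jointLaw_snd]
  unfold jointLaw
  rw [Measure.snd, Measure.map_map (by fun_prop) (by fun_prop)]
  simp only [Function.comp_def]

lemma jointLaw_fst (ν : Measure ℝ) [SFinite ν] : (jointLaw ν).fst = ν := by
  unfold jointLaw
  rw [Measure.fst, Measure.map_map (by fun_prop) (by fun_prop)]
  exact Measure.fst_prod

lemma outDens_lt_top (ν : Measure ℝ) [IsFiniteMeasure ν] (y : ℝ) : outDens ν y < ⊤ := by
  have : outDens ν y ≤ ∫⁻ _, 1 ∂ν := by
    refine lintegral_mono fun x => ?_
    rw [gaussianPDF]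
    refine ENNReal.ofReal_le_one.2 ?_
    rw [gaussianPDFReal]
    refine mul_le_one₀ ?_ (Real.exp_nonneg _) ?_
    · refine inv_le_one_of_one_le₀ ?_
      rw [Real.one_le_sqrt]
      have := Real.pi_gt_three
      simp; linarith
    · rw [Real.exp_le_one_iff]
      simp only [NNReal.coe_one]
      nlinarith [sq_nonneg (y - x)]
  refine this.trans_lt ?_
  simp

lemma outDens_pos (ν : Measure ℝ) (hν : ν ≠ 0) (y : ℝ) : 0 < outDens ν y := by
  have hy : Measurable (fun x : ℝ => gaussianPDF x 1 y) := meas_pdf_left y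
  rw [outDens, lintegral_pos_iff_support hy]
  have : (Function.support fun x => gaussianPDF x 1 y) = Set.univ := by
    ext x; simp [(gaussianPDF_pos x one_ne_zero y).ne']
  rw [this]
  exact Measure.measure_univ_pos.2 hν

lemma llr_joint (ν : Measure ℝ) [IsProbabilityMeasure ν] :
    llr (jointLaw ν) ((jointLaw ν).fst.prod (jointLaw ν).snd) =ᵐ[jointLaw ν]
      fun p => Real.log (gaussianPDFReal p.1 1 p.2) - Real.log (outDens ν p.2).toReal := by
  have hm := measurable_outDens ν
  have hm2 : Measurable (fun p : ℝ × ℝ => outDens ν p.2) := hm.comp measurable_snd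
  have hm3 : Measurable (fun p : ℝ × ℝ => gaussianPDF p.1 1 p.2 / outDens ν p.2) :=
    meas_pdf_uncurry.div hm2
  have hprod : (jointLaw ν).fst.prod (jointLaw ν).snd
      = (ν.prod volume).withDensity (fun p => outDens ν p.2) := by
    rw [jointLaw_fst, jointLaw_snd, prod_withDensity_right hm]
  have hj : jointLaw ν = ((ν.prod volume).withDensity (fun p => outDens ν p.2)).withDensity
      (fun p => gaussianPDF p.1 1 p.2 / outDens ν p.2) := by
    rw [← withDensity_mul _ hm2 hm3, jointLaw_eq]
    congr 1 with p
    simp only [Pi.mul_apply]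
    rw [ENNReal.mul_div_cancel (outDens_pos ν (IsProbabilityMeasure.ne_zero ν) _).ne'
      (outDens_lt_top ν _).ne]
  have hac : jointLaw ν ≪ (jointLaw ν).fst.prod (jointLaw ν).snd := by
    rw [hprod]
    conv_lhs => rw [hj]
    exact withDensity_absolutelyContinuous _ _
  refine hac.ae_le ?_
  have hsf : SigmaFinite ((jointLaw ν).fst.prod (jointLaw ν).snd) := by
    have : IsProbabilityMeasure (jointLaw ν) :=
      Measure.isProbabilityMeasure_map (by fun_prop)
    infer_instance
  rw [hprod] at hsf ⊢
  have := Measure.rnDeriv_withDensity ((ν.prod volume).withDensity (fun p => outDens ν p.2)) hm3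
  rw [← hj] at this
  filter_upwards [this] with p hp
  rw [llr, hp, ENNReal.toReal_div, toReal_gaussianPDF, Real.log_div]
  · exact (gaussianPDFReal_pos _ _ _ one_ne_zero).ne'
  · exact (ENNReal.toReal_pos (outDens_pos ν (IsProbabilityMeasure.ne_zero ν) _).ne'
      (outDens_lt_top ν _).ne).ne'

lemma log_pdf (m y : ℝ) (v : NNReal) (hv : v ≠ 0) : Real.log (gaussianPDFReal m v y)
    = -(1/2) * Real.log (2 * Real.pi * v) - (y - m)^2 / (2 * v) := by
  have hv' : (0:ℝ) < v := lt_of_le_of_ne v.2 (by exact_mod_cast hv.symm)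
  have h1 : (0:ℝ) < 2 * Real.pi * v := by positivity
  rw [gaussianPDFReal, Real.log_mul (by positivity) (by positivity), Real.log_inv, Real.log_exp,
    Real.log_sqrt h1.le]
  ring

lemma integrable_sq_gauss (m : ℝ) (v : NNReal) :
    Integrable (fun x : ℝ => x ^ 2) (gaussianReal m v) :=
  (memLp_id_gaussianReal (μ := m) (v := v) 2).integrable_sq

lemma integral_sq_gauss (v : NNReal) : ∫ x : ℝ, x ^ 2 ∂(gaussianReal 0 v) = v := by
  have := variance_fun_id_gaussianReal (μ := 0) (v := v)
  rw [variance_eq_integral (by fun_prop)] at this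
  simpa using this

lemma mutInfo_eq (ν : Measure ℝ) [IsProbabilityMeasure ν] (h : mutInfo ν ≠ ⊤) :
    Integrable (fun y => (outDens ν y).toReal * Real.log (outDens ν y).toReal) ∧
    mutInfo ν = ((-(∫ y, (outDens ν y).toReal * Real.log (outDens ν y).toReal)
      - (1/2) * Real.log (2 * Real.pi) - 1/2 : ℝ) : EReal) := by
  have hm := measurable_outDens ν
  unfold mutInfo klDiv at h ⊢
  split_ifs at h ⊢ with hc
  · have hint := (integrable_congr (llr_joint ν)).1 hc.2
    have hlog : (fun p : ℝ × ℝ => Real.log (gaussianPDFReal p.1 1 p.2))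
        = fun p => -(1/2) * Real.log (2 * Real.pi) - (p.2 - p.1)^2 / 2 := by
      ext p; rw [log_pdf _ _ _ one_ne_zero]; simp
    have hpdf : Integrable (fun p : ℝ × ℝ => Real.log (gaussianPDFReal p.1 1 p.2)) (jointLaw ν) ∧
        ∫ p, Real.log (gaussianPDFReal p.1 1 p.2) ∂(jointLaw ν)
          = - (1/2) * Real.log (2 * Real.pi) - 1/2 := by
      rw [hlog]
      have hi : Integrable (fun z : ℝ => -(1/2) * Real.log (2 * Real.pi) - z^2 / 2)
          (gaussianReal 0 1) :=
        (integrable_const _).sub ((integrable_sq_gauss 0 1).div_const 2)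
      constructor
      · unfold jointLaw
        rw [integrable_map_measure (by fun_prop) (by fun_prop)]
        have := hi.comp_snd ν
        refine this.congr (Filter.Eventually.of_forall fun p => ?_)
        simp
      · unfold jointLaw
        rw [integral_map (by fun_prop) (by fun_prop)]
        simp only [add_sub_cancel_left]
        rw [integral_fun_snd (fun z : ℝ => -(1/2) * Real.log (2 * Real.pi) - z^2 / 2)]
        rw [integral_sub (integrable_const _) ((integrable_sq_gauss 0 1).div_const 2),
          integral_div, integral_sq_gauss]
        simp
    have hlo : Integrable (fun p : ℝ × ℝ => Real.log (outDens ν p.2).toReal) (jointLaw ν) := by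
      have := hpdf.1.sub hint
      refine this.congr (Filter.Eventually.of_forall fun p => ?_)
      simp
    have hlom : AEStronglyMeasurable (fun y => Real.log (outDens ν y).toReal) (jointLaw ν).snd :=
      (Real.measurable_log.comp hm.ennreal_toReal).aestronglyMeasurable
    have hlo' : Integrable (fun y => Real.log (outDens ν y).toReal) (jointLaw ν).snd := by
      rw [Measure.snd] at hlom ⊢
      rw [integrable_map_measure hlom (by fun_prop)]
      exact hlo
    have hlo'' : ∫ p, Real.log (outDens ν p.2).toReal ∂(jointLaw ν)
        = ∫ y, Real.log (outDens ν y).toReal ∂(jointLaw ν).snd := by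
      rw [Measure.snd] at hlom ⊢
      rw [integral_map (by fun_prop) hlom]
    rw [jointLaw_snd] at hlo' hlo''
    have hlt : ∀ᵐ y ∂(volume : Measure ℝ), outDens ν y < ⊤ :=
      Filter.Eventually.of_forall (outDens_lt_top ν)
    rw [integrable_withDensity_iff_integrable_smul' hm hlt] at hlo'
    rw [integral_withDensity_eq_integral_toReal_smul hm hlt] at hlo''
    simp only [smul_eq_mul] at hlo' hlo''
    refine ⟨hlo', ?_⟩
    rw [integral_congr_ae (llr_joint ν), integral_sub hpdf.1 hlo, hpdf.2, hlo'']
    congr 1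
    ring
  · exact absurd rfl h

lemma stdPhi_eq : gaussianPDFReal 0 1 = stdPhi := by
  ext y
  rw [gaussianPDFReal, stdPhi]
  simp only [NNReal.coe_one, mul_one, sub_zero]
  field_simp

lemma stdPhi_pos (y : ℝ) : 0 < stdPhi y := by
  unfold stdPhi; positivity

lemma integrable_stdPhi : Integrable stdPhi := by
  rw [← stdPhi_eq]; exact integrable_gaussianPDFReal 0 1

lemma integrable_sq_stdPhi : Integrable (fun x => x ^ 2 * stdPhi x) := by
  have h := integrable_sq_gauss 0 1
  rw [gaussianReal_of_var_ne_zero _ one_ne_zero,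
    integrable_withDensity_iff_integrable_smul' (measurable_gaussianPDF 0 1)
      (Filter.Eventually.of_forall fun _ => gaussianPDF_lt_top)] at h
  refine h.congr (Filter.Eventually.of_forall fun x => ?_)
  simp [toReal_gaussianPDF, stdPhi_eq, mul_comm]

lemma stdPhi_neg (y : ℝ) : stdPhi (-y) = stdPhi y := by simp [stdPhi]

lemma hasDerivAt_stdPhi (x : ℝ) : HasDerivAt stdPhi (-(x * stdPhi x)) x := by
  have h1 : HasDerivAt (fun y : ℝ => -(y ^ 2) / 2) (-x) x := by
    have := ((hasDerivAt_pow 2 x).neg).div_const 2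
    convert! this using 1
    simp; ring
  have := (h1.exp).div_const (Real.sqrt (2 * Real.pi))
  convert! this using 1
  unfold stdPhi; ring

lemma hasDerivAt_mul_stdPhi (x : ℝ) :
    HasDerivAt (fun y => -(y * stdPhi y)) (x ^ 2 * stdPhi x - stdPhi x) x := by
  have := ((hasDerivAt_id x).mul (hasDerivAt_stdPhi x)).neg
  convert! this using 1
  simp; ring

lemma integral_sq_Ioi (t : ℝ) :
    ∫ x in Set.Ioi t, x ^ 2 * stdPhi x = t * stdPhi t + gaussQ t := by
  have hi : Integrable (fun x => x ^ 2 * stdPhi x - stdPhi x) :=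
    integrable_sq_stdPhi.sub integrable_stdPhi
  have hxi : Integrable (fun x => -(x * stdPhi x)) := by
    have h := (integrable_sq_stdPhi.add integrable_stdPhi)
    refine h.mono' ?_ (Filter.Eventually.of_forall fun x => ?_)
    · unfold stdPhi
      exact (by fun_prop : Measurable _).aestronglyMeasurable
    · have := stdPhi_pos x
      simp only [norm_neg, norm_mul, Real.norm_eq_abs, abs_of_pos this, Pi.add_apply]
      have h2 : |x| ≤ x^2 + 1 := by nlinarith [sq_abs x, sq_nonneg (|x| - 1), abs_nonneg x]
      nlinarith
  have ht : Filter.Tendsto (fun y => -(y * stdPhi y)) Filter.atTop (nhds 0) :=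
    tendsto_zero_of_hasDerivAt_of_integrableOn_Ioi (a := t) (fun x _ => hasDerivAt_mul_stdPhi x)
      hi.integrableOn hxi.integrableOn
  have := integral_Ioi_of_hasDerivAt_of_tendsto' (a := t) (fun x _ => hasDerivAt_mul_stdPhi x)
    hi.integrableOn ht
  rw [integral_sub integrable_sq_stdPhi.integrableOn integrable_stdPhi.integrableOn] at this
  unfold gaussQ
  linarith

lemma integral_two_tails (f : ℝ → ℝ) (hf : Integrable f) (he : ∀ x, f (-x) = f x) (t : ℝ)
    (ht : 0 ≤ t) : ∫ x in {x : ℝ | t < |x|}, f x = 2 * ∫ x in Set.Ioi t, f x := by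
  have hs : {x : ℝ | t < |x|} = Set.Ioi t ∪ Set.Iio (-t) := by
    ext x
    simp only [Set.mem_ofPred_eq, lt_abs, Set.mem_union, Set.mem_Ioi, Set.mem_Iio]
    constructor <;> (rintro (h | h); exact Or.inl h; right; linarith)
  rw [hs, setIntegral_union _ measurableSet_Iio hf.integrableOn hf.integrableOn]
  · have := integral_comp_neg_Ioi t f
    simp only [he] at this
    rw [← integral_Iic_eq_integral_Iio, ← this]
    ring
  · rw [Set.disjoint_left]
    intro x hx hx'
    simp only [Set.mem_Ioi, Set.mem_Iio] at hx hx'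
    linarith

lemma gaussQ_pos (t : ℝ) : 0 < gaussQ t := by
  unfold gaussQ
  rw [setIntegral_pos_iff_support_of_nonneg_ae
    (Filter.Eventually.of_forall fun x => (stdPhi_pos x).le) integrable_stdPhi.integrableOn]
  have : Function.support stdPhi = Set.univ := by
    ext x; simp [(stdPhi_pos x).ne']
  rw [this]; simp

lemma gauss_scale {P : ℝ} (hP : 0 < P) :
    gaussianReal 0 P.toNNReal = (gaussianReal 0 1).map (Real.sqrt P * ·) := by
  rw [gaussianReal_map_const_mul]
  congr 1
  · simp
  · ext; simp [Real.sq_sqrt hP.le, hP.le]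

lemma preim_tail {A P : ℝ} (hP : 0 < P) :
    (Real.sqrt P * ·) ⁻¹' {x : ℝ | A < |x|} = {z : ℝ | A / Real.sqrt P < |z|} := by
  have := Real.sqrt_pos.2 hP
  ext z
  simp only [Set.mem_preimage, Set.mem_ofPred_eq, abs_mul, abs_of_pos this]
  rw [div_lt_iff₀ this, mul_comm]

lemma meas_tail (t : ℝ) : MeasurableSet {x : ℝ | t < |x|} :=
  measurableSet_lt measurable_const measurable_id.abs

lemma tail_prob {A P : ℝ} (hA : 0 < A) (hP : 0 < P) :
    (gaussianReal 0 P.toNNReal).real {x : ℝ | A < |x|}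
    = 2 * gaussQ (A / Real.sqrt P) := by
  have := Real.sqrt_pos.2 hP
  rw [gauss_scale hP, map_measureReal_apply (by fun_prop) (meas_tail A),
    preim_tail hP, Measure.real, gaussianReal_apply_eq_integral 0 one_ne_zero, stdPhi_eq,
    ENNReal.toReal_ofReal, integral_two_tails _ integrable_stdPhi stdPhi_neg _ (by positivity)]
  · rfl
  · exact integral_nonneg fun x => (stdPhi_pos x).le

lemma tail_sq {A P : ℝ} (hA : 0 < A) (hP : 0 < P) :
    ∫ x in {x : ℝ | A < |x|}, x ^ 2 ∂(gaussianReal 0 P.toNNReal)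
    = P * (2 * (A / Real.sqrt P * stdPhi (A / Real.sqrt P) + gaussQ (A / Real.sqrt P))) := by
  have := Real.sqrt_pos.2 hP
  rw [gauss_scale hP, setIntegral_map (meas_tail A) (by fun_prop) (by fun_prop),
    preim_tail hP]
  simp only [mul_pow, Real.sq_sqrt hP.le]
  rw [integral_const_mul, ← integral_sq_Ioi,
    ← integral_two_tails _ integrable_sq_stdPhi (by simp [stdPhi_neg]) _ (by positivity)]
  congr 1
  rw [← integral_indicator (meas_tail _), integral_gaussianReal_eq_integral_smul one_ne_zero,
    ← integral_indicator (meas_tail _), stdPhi_eq]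
  congr 1 with x
  by_cases hx : x ∈ {x : ℝ | A / Real.sqrt P < |x|}
  · rw [Set.indicator_of_mem hx, Set.indicator_of_mem hx]; simp [mul_comm]
  · rw [Set.indicator_of_notMem hx, Set.indicator_of_notMem hx]; simp

lemma out_toReal_pos (ν : Measure ℝ) [IsFiniteMeasure ν] (hν : ν ≠ 0) (y : ℝ) :
    0 < (outDens ν y).toReal :=
  ENNReal.toReal_pos (outDens_pos ν hν _).ne' (outDens_lt_top ν _).ne

lemma out_moments (ν : Measure ℝ) [IsFiniteMeasure ν] (h2 : Integrable (fun x : ℝ => x ^ 2) ν) :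
    Integrable (fun y => (outDens ν y).toReal) ∧ ∫ y, (outDens ν y).toReal = ν.real Set.univ ∧
    Integrable (fun y => (outDens ν y).toReal * y ^ 2) ∧
      ∫ y, (outDens ν y).toReal * y ^ 2 = ∫ x, x ^ 2 ∂ν + ν.real Set.univ := by
  have hm := measurable_outDens ν
  have hlt : ∀ᵐ y ∂(volume : Measure ℝ), outDens ν y < ⊤ :=
    Filter.Eventually.of_forall (outDens_lt_top ν)
  have key1 : ∀ f : ℝ → ℝ, Measurable f →
      Integrable (fun p : ℝ × ℝ => f (p.1 + p.2)) (ν.prod (gaussianReal 0 1)) →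
      Integrable (fun y => (outDens ν y).toReal * f y) ∧
      ∫ y, (outDens ν y).toReal * f y = ∫ p, f (p.1 + p.2) ∂(ν.prod (gaussianReal 0 1)) := by
    intro f hf hi
    have h1 : Integrable f ((ν.prod (gaussianReal 0 1)).map (fun p => p.1 + p.2)) := by
      rw [integrable_map_measure hf.aestronglyMeasurable (by fun_prop)]
      exact hi
    have h2 := integral_map (μ := ν.prod (gaussianReal 0 1))
      (φ := fun p : ℝ × ℝ => p.1 + p.2) (by fun_prop) (f := f) hf.aestronglyMeasurable
    rw [conv_eq] at h1 h2
    rw [integrable_withDensity_iff_integrable_smul' hm hlt] at h1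
    rw [integral_withDensity_eq_integral_toReal_smul hm hlt] at h2
    exact ⟨h1, h2⟩
  have hx : Integrable (fun x : ℝ => x) ν := by
    refine (h2.add (integrable_const 1)).mono' (by fun_prop)
      (Filter.Eventually.of_forall fun x => ?_)
    simp only [Real.norm_eq_abs, Pi.add_apply]
    nlinarith [sq_abs x, sq_nonneg (|x| - 1), abs_nonneg x]
  have hz : Integrable (fun x : ℝ => x) (gaussianReal 0 1) :=
    (memLp_id_gaussianReal (μ := 0) (v := 1) 1).integrable (by simp)
  have a := key1 (fun _ => 1) measurable_const (integrable_const 1)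
  simp only [mul_one] at a
  have i1 := h2.comp_fst (gaussianReal 0 1)
  have i2 := (hx.mul_prod hz).const_mul 2
  have i3 := (integrable_sq_gauss 0 1).comp_snd ν
  have e : (fun p : ℝ × ℝ => (p.1 + p.2) ^ 2) = fun p => p.1 ^ 2 + 2 * (p.1 * p.2) + p.2 ^ 2 := by
    ext p; ring
  have b := key1 (fun y => y ^ 2) (by fun_prop) (by
    simp only [e]; exact (i1.add i2).add i3)
  refine ⟨a.1, ?_, b.1, ?_⟩
  · rw [a.2, integral_const, ← Set.univ_prod_univ, measureReal_prod_prod]; simp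
  · rw [b.2]
    simp only [e]
    have i12 : Integrable (fun p : ℝ × ℝ => p.1 ^ 2 + 2 * (p.1 * p.2)) (ν.prod (gaussianReal 0 1)) :=
      i1.add i2
    rw [integral_add i12 i3, integral_add i1 i2, integral_const_mul,
      integral_prod_mul (fun x : ℝ => x) (fun x : ℝ => x), integral_id_gaussianReal,
      integral_fun_snd (fun z : ℝ => z ^ 2), integral_fun_fst (fun z : ℝ => z ^ 2),
      integral_sq_gauss]
    simp

lemma gauss_entropy (v : NNReal) (hv : v ≠ 0) :
    Integrable (fun y => gaussianPDFReal 0 v y * Real.log (gaussianPDFReal 0 v y)) ∧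
    ∫ y, gaussianPDFReal 0 v y * Real.log (gaussianPDFReal 0 v y)
      = -(1/2) * Real.log (2 * Real.pi * v) - 1 / 2 := by
  have hv' : (v : ℝ) ≠ 0 := by exact_mod_cast hv
  have hi : Integrable (fun y => Real.log (gaussianPDFReal 0 v y)) (gaussianReal 0 v) := by
    simp only [log_pdf _ _ _ hv, sub_zero]
    exact (integrable_const _).sub ((integrable_sq_gauss 0 v).div_const _)
  constructor
  · rw [gaussianReal_of_var_ne_zero _ hv,
      integrable_withDensity_iff_integrable_smul' (measurable_gaussianPDF 0 v)
        (Filter.Eventually.of_forall fun _ => gaussianPDF_lt_top)] at hi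
    simpa only [toReal_gaussianPDF, smul_eq_mul] using hi
  · have := integral_gaussianReal_eq_integral_smul (μ := 0)
      (f := fun y => Real.log (gaussianPDFReal 0 v y)) hv
    simp only [smul_eq_mul] at this
    rw [← this]
    simp only [log_pdf _ _ _ hv, sub_zero]
    rw [integral_sub (integrable_const _) ((integrable_sq_gauss 0 v).div_const _),
      integral_div, integral_sq_gauss]
    simp only [integral_const, probReal_univ, one_smul]
    field_simp

lemma pointwise_ineq {a b r : ℝ} (ha : 0 < a) (hb : 0 < b) (hr : 0 < r) :
    a * Real.log a ≤ (a + b) * Real.log (a + b) - b * Real.log r - b + r := by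
  have h1 : Real.log a ≤ Real.log (a + b) := Real.log_le_log ha (by linarith)
  have h2 : Real.log b ≤ Real.log (a + b) := Real.log_le_log hb (by linarith)
  have h3 := Real.log_le_sub_one_of_pos (div_pos hr hb)
  rw [Real.log_div hr.ne' hb.ne'] at h3
  have h4 : b * (Real.log r - Real.log b) ≤ r - b := by
    calc _ ≤ b * (r / b - 1) := by gcongr
      _ = r - b := by field_simp
  nlinarith

/-- bound on the (unnormalized) entropy of the bulk part -/
lemma entropy_bulk (P p W : ℝ) (hP : 0 < P) (νA νB : Measure ℝ) [IsFiniteMeasure νA]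
    [IsFiniteMeasure νB] (hsum : νA + νB = gaussianReal 0 P.toNNReal)
    (hA0 : νA ≠ 0) (hB0 : νB ≠ 0) (hp : νB.real Set.univ = p)
    (hp0 : 0 < p) (hB2 : Integrable (fun x : ℝ => x ^ 2) νB)
    (hW : ∫ x, x ^ 2 ∂νB = p * W) (hW0 : 0 ≤ W)
    (hint : Integrable (fun y => (outDens νA y).toReal * Real.log (outDens νA y).toReal)) :
    ∫ y, (outDens νA y).toReal * Real.log (outDens νA y).toReal
      ≤ -(1/2) * Real.log (2 * Real.pi * (1 + P)) - 1/2 - p * Real.log p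
        + p * ((1/2) * Real.log (2 * Real.pi * (1 + W)) + 1/2) := by
  set v : NNReal := P.toNNReal + 1 with hv
  have hv0 : v ≠ 0 := by positivity
  have hvR : (v : ℝ) = 1 + P := by simp [hv, hP.le, add_comm]
  set w : NNReal := W.toNNReal + 1 with hw
  have hw0 : w ≠ 0 := by positivity
  have hwR : (w : ℝ) = 1 + W := by simp [hw, hW0, add_comm]
  have hF : ∀ᵐ y ∂(volume : Measure ℝ),
      (outDens νA y).toReal + (outDens νB y).toReal = gaussianPDFReal 0 v y := by
    have h1 : volume.withDensity (outDens (gaussianReal 0 P.toNNReal))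
        = volume.withDensity (gaussianPDF 0 v) := by
      rw [← conv_eq, ← gaussianReal_of_var_ne_zero _ hv0]
      have := gaussianReal_conv_gaussianReal (m₁ := 0) (m₂ := 0) (v₁ := P.toNNReal) (v₂ := 1)
      rw [Measure.conv, add_zero] at this
      exact this
    rw [withDensity_eq_iff_of_sigmaFinite (measurable_outDens _).aemeasurable
      (measurable_gaussianPDF 0 v).aemeasurable] at h1
    filter_upwards [h1] with y hy
    rw [← toReal_gaussianPDF, ← hy, ← hsum,
      ← ENNReal.toReal_add (outDens_lt_top νA y).ne (outDens_lt_top νB y).ne]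
    simp only [outDens]
    rw [lintegral_add_measure]
  obtain ⟨b1, b2, b3, b4⟩ := out_moments νB hB2
  have ge := gauss_entropy v hv0
  set k : ℝ := Real.log p - (1/2) * Real.log (2 * Real.pi * (1 + W)) with hk
  have hlogr : ∀ y, Real.log (p * gaussianPDFReal 0 w y) = k - y ^ 2 / (2 * (1 + W)) := by
    intro y
    rw [Real.log_mul hp0.ne' (gaussianPDFReal_pos _ _ _ hw0).ne', log_pdf _ _ _ hw0, hwR]
    simp only [sub_zero, hk]; ring
  have hle : ∀ᵐ y ∂(volume : Measure ℝ),
      (outDens νA y).toReal * Real.log (outDens νA y).toReal ≤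
      gaussianPDFReal 0 v y * Real.log (gaussianPDFReal 0 v y)
        - (k + 1) * (outDens νB y).toReal
        + (1 / (2 * (1 + W))) * ((outDens νB y).toReal * y ^ 2) + p * gaussianPDFReal 0 w y := by
    filter_upwards [hF] with y hy
    have := pointwise_ineq (out_toReal_pos νA hA0 y) (out_toReal_pos νB hB0 y)
      (mul_pos hp0 (gaussianPDFReal_pos 0 w y hw0))
    rw [hy, hlogr] at this
    refine this.trans (le_of_eq ?_)
    ring
  have i1 := ge.1.sub (b1.const_mul (k + 1))
  have i2 := i1.add (b3.const_mul (1 / (2 * (1 + W))))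
  have i3 := i2.add ((integrable_gaussianPDFReal 0 w).const_mul p)
  have := integral_mono_ae hint i3 hle
  refine this.trans (le_of_eq ?_)
  have e3 := integral_add i2 ((integrable_gaussianPDFReal 0 w).const_mul p)
  have e2 := integral_add i1 (b3.const_mul (1 / (2 * (1 + W))))
  have e1 := integral_sub ge.1 (b1.const_mul (k + 1))
  rw [integral_const_mul] at e1 e2 e3
  rw [b4, hW, hp] at e2
  rw [ge.2, b2, hp, hvR] at e1
  rw [integral_gaussianPDFReal_eq_one 0 hw0] at e3
  refine e3.trans ?_
  have hWpos : (1 + W) ≠ 0 := by positivity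
  have hx : 1 / (2 * (1 + W)) * (p * W + p) = p / 2 := by field_simp; ring
  rw [hx] at e2
  have e2' := e2.trans (congrArg (· + p / 2) e1)
  refine (congrArg (· + p * 1) e2').trans ?_
  simp only [hk]
  ring

/-- Non-asymptotic achievability bound for the amplitude-constrained capacity:
for all `A, P > 0` with `θ = A/√P` and `2Q(θ) < 1`,
`(1/2)ln(1+P) - C(A,P) ≤ (1/(1-2Q(θ))) [Q(θ) ln(1 + (A√P/(1+P))(φ(θ)/Q(θ))) + h(2Q(θ))]`. -/
theorem smith_capacity_nonasymptotic_achievability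
    (A P : ℝ) (hA : 0 < A) (hP : 0 < P)
    (θ : ℝ) (hθ : θ = A / Real.sqrt P) (hQ : 2 * gaussQ θ < 1) :
    (((1 / 2) * Real.log (1 + P) : ℝ) : EReal) - CAP A P ≤
      (((1 / (1 - 2 * gaussQ θ)) *
        (gaussQ θ * Real.log (1 + (A * Real.sqrt P / (1 + P)) * (stdPhi θ / gaussQ θ))
          + binEnt (2 * gaussQ θ)) : ℝ) : EReal) := by
  have hsP := Real.sqrt_pos.2 hP
  have hsq := Real.sq_sqrt hP.le
  have hq0 := gaussQ_pos θ
  have hphi := stdPhi_pos θ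
  set q := gaussQ θ with hq
  set T : Set ℝ := {x : ℝ | A < |x|} with hT
  have hTm : MeasurableSet T := meas_tail A
  set γ := gaussianReal 0 P.toNNReal with hγ
  have hTp : γ.real T = 2 * q := by rw [hq, hθ]; exact tail_prob hA hP
  have hT2 : ∫ x in T, x ^ 2 ∂γ = P * (2 * (θ * stdPhi θ + q)) := by
    rw [hq, hθ]; exact tail_sq hA hP
  have hTc : γ.real Tᶜ = 1 - 2 * q := by rw [probReal_compl_eq_one_sub hTm, hTp]
  have hi2 : Integrable (fun x : ℝ => x ^ 2) γ := integrable_sq_gauss 0 _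
  have hθ0 : 0 < θ := by rw [hθ]; positivity
  have hPθ : P * θ = A * Real.sqrt P := by
    rw [hθ]; field_simp; rw [hsq]
  set νA := γ.restrict Tᶜ with hνA
  set νB := γ.restrict T with hνB
  have hAu : νA.real Set.univ = 1 - 2 * q := by rw [hνA, measureReal_restrict_apply_univ, hTc]
  have hBu : νB.real Set.univ = 2 * q := by rw [hνB, measureReal_restrict_apply_univ, hTp]
  have hs : 0 < 1 - 2 * q := by linarith
  have hA0 : νA ≠ 0 := by
    intro h; rw [h] at hAu; simp at hAu; linarith
  have hB0 : νB ≠ 0 := by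
    intro h; rw [h] at hBu; simp at hBu; linarith
  have hsum : νA + νB = γ := by
    rw [hνA, hνB, add_comm, Measure.restrict_add_restrict_compl hTm]
  set s := 1 - 2 * q with hsdef
  set L := 1 + (A * Real.sqrt P / (1 + P)) * (stdPhi θ / q) with hL
  have hL0 : 0 < L := by positivity
  set W := P + A * Real.sqrt P * (stdPhi θ / q) with hWdef
  have hW0 : 0 ≤ W := by positivity
  have hWL : 1 + W = (1 + P) * L := by
    rw [hWdef, hL]; field_simp; ring
  have hBW : ∫ x, x ^ 2 ∂νB = 2 * q * W := by
    rw [hνB, hT2, hWdef, ← hPθ]; field_simp; ring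
  set c : ENNReal := ENNReal.ofReal s⁻¹ with hc
  have hcr : c.toReal = s⁻¹ := ENNReal.toReal_ofReal (by positivity)
  set μ := c • νA with hμ
  have hμp : IsProbabilityMeasure μ := by
    constructor
    have h1 : νA Set.univ = ENNReal.ofReal s := by
      rw [← hAu, Measure.real, ENNReal.ofReal_toReal (measure_ne_top _ _)]
    rw [hμ, Measure.smul_apply, h1, smul_eq_mul, hc, ← ENNReal.ofReal_mul (by positivity),
      inv_mul_cancel₀ hs.ne', ENNReal.ofReal_one]
  have hmem : μ ∈ {μ : Measure ℝ | IsProbabilityMeasure μ ∧ μ {x | A < |x|} = 0 ∧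
      ∫ x, x ^ 2 ∂μ ≤ P} := by
    refine ⟨hμp, ?_, ?_⟩
    · change μ T = 0
      rw [hμ, Measure.smul_apply, hνA, Measure.restrict_apply hTm]
      simp
    · rw [hμ, integral_smul_measure, hcr, hνA]
      have h1 := integral_add_compl hTm hi2
      rw [hT2, integral_sq_gauss, Real.coe_toNNReal P hP.le] at h1
      have h2 : ∫ x in Tᶜ, x ^ 2 ∂γ ≤ s * P := by
        have : 0 < P * (θ * stdPhi θ) := by positivity
        rw [hsdef]; nlinarith
      rw [smul_eq_mul]
      calc _ ≤ s⁻¹ * (s * P) := by gcongr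
        _ = P := by field_simp
  have hcap : mutInfo μ ≤ CAP A P := le_iSup₂_of_le μ hmem le_rfl
  set R := (1 / s) * (q * Real.log L + binEnt (2 * q)) with hR
  set C := (1 / 2) * Real.log (1 + P) with hC
  have hmain : ((C - R : ℝ) : EReal) ≤ mutInfo μ := by
    by_cases htop : mutInfo μ = ⊤
    · rw [htop]; exact le_top
    obtain ⟨hint, heq⟩ := mutInfo_eq μ htop
    rw [heq, EReal.coe_le_coe_iff]
    have hout : ∀ y, (outDens μ y).toReal = s⁻¹ * (outDens νA y).toReal := by
      intro y
      rw [outDens, hμ, lintegral_smul_measure, smul_eq_mul, ENNReal.toReal_mul, hcr, outDens]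
    obtain ⟨a1, a2, -, -⟩ := out_moments νA hi2.restrict
    have hf : ∀ y, (outDens μ y).toReal * Real.log (outDens μ y).toReal
        = s⁻¹ * ((outDens νA y).toReal * Real.log (outDens νA y).toReal
          - Real.log s * (outDens νA y).toReal) := by
      intro y
      have := out_toReal_pos νA hA0 y
      rw [hout, Real.log_mul (by positivity) this.ne', Real.log_inv]
      ring
    have hintA : Integrable
        (fun y => (outDens νA y).toReal * Real.log (outDens νA y).toReal) := by
      have := (hint.const_mul s).add (a1.const_mul (Real.log s))
      refine this.congr (Filter.Eventually.of_forall fun y => ?_)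
      simp only [Pi.add_apply, hf]
      field_simp
      ring
    have hE := entropy_bulk P (2 * q) W hP νA νB hsum hA0 hB0 hBu (by positivity)
      hi2.restrict hBW hW0 hintA
    simp only [hf]
    rw [integral_const_mul, integral_sub hintA (a1.const_mul _), integral_const_mul, a2, hAu]
    set E := ∫ y, (outDens νA y).toReal * Real.log (outDens νA y).toReal
    have hpi := Real.pi_pos
    rw [hWL, ← mul_assoc, Real.log_mul (by positivity) hL0.ne',
      Real.log_mul (by positivity) (by positivity : (1 + P) ≠ 0)] at hE
    set l2 := Real.log (2 * Real.pi)
    set lP := Real.log (1 + P)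
    set lL := Real.log L
    have hbin : binEnt (2 * q) = -(2 * q * Real.log (2 * q)) - s * Real.log s := rfl
    rw [hR, hC, hbin]
    have key : s * (1 / 2 * lP) - (q * lL + (-(2 * q * Real.log (2 * q)) - s * Real.log s))
        ≤ -(E - Real.log s * s) - s * (1 / 2 * l2) - s * (1 / 2) := by
      rw [hsdef] at *
      linarith
    have key2 := mul_le_mul_of_nonneg_left key (inv_nonneg.2 hs.le)
    have hss : s⁻¹ * s = 1 := inv_mul_cancel₀ hs.ne'
    calc _ = s⁻¹ * (s * (1 / 2 * lP)
          - (q * lL + (-(2 * q * Real.log (2 * q)) - s * Real.log s))) := by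
          field_simp
      _ ≤ _ := key2
      _ = _ := by
          field_simp
  calc ((C : ℝ) : EReal) - CAP A P ≤ (C : EReal) - ((C - R : ℝ) : EReal) :=
        EReal.sub_le_sub le_rfl (hmain.trans hcap)
    _ = (R : EReal) := by
        rw [← EReal.coe_sub]; congr 1; ring
end

section
/- Fix A, P > 0 and n ≥ 1. Define u_n(A) as the infimum of D( P_{X^n} ∗ N(0, I_n) ‖ N(0, 1+P)^{⊗n} ) over all probability measures P_{X^n} on ℝ^n supported in the cube [−A, A]^n, where P_{X^n} ∗ N(0, I_n) denotes the convolution with the n-fold product of standard Gaussians (the law of X^n + Z^n with Z^n standard Gaussian independent of X^n), and N(0,1+P)^{⊗n} is the n-fold product of N(0,1+P). Then u_n(A) = n · u_1(A). -/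
open MeasureTheory ProbabilityTheory

/-- The law of the noise vector `Z^n`: the `n`-fold product of standard Gaussians `N(0,1)`. -/
noncomputable def stdGaussianPi (n : ℕ) : Measure (Fin n → ℝ) :=
  Measure.pi fun _ => gaussianReal 0 1

/-- The `I`-projection value `u_n(A)`: the infimum of
`D(P_{X^n} ∗ N(0,I_n) ‖ N(0,1+P)^{⊗n})` over probability measures `P_{X^n}` on `ℝ^n`
supported in the cube `[-A,A]^n`; the convolution is realized as the law of `X^n + Z^n`. -/
noncomputable def uIproj (n : ℕ) (A P : ℝ) : EReal :=
  ⨅ μ ∈ {μ : Measure (Fin n → ℝ) | IsProbabilityMeasure μ ∧ μ {x | ∃ j, A < |x j|} = 0},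
    klDiv ((μ.prod (stdGaussianPi n)).map fun p => p.1 + p.2)
      (Measure.pi fun _ : Fin n => gaussianReal 0 (1 + P).toNNReal)

section Helpers

/-- The EReal divergence agrees with Mathlib's for probability measures. -/
lemma klDiv_eq_coe {α : Type*} [MeasurableSpace α] (μ ν : Measure α)
    [IsProbabilityMeasure μ] [IsProbabilityMeasure ν] :
    klDiv μ ν = ((InformationTheory.klDiv μ ν : ENNReal) : EReal) := by
  unfold klDiv
  split_ifs with h
  · have h0 := InformationTheory.integral_llr_add_sub_measure_univ_nonneg h.1 h.2
    rw [InformationTheory.klDiv_of_ac_of_integrable h.1 h.2]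
    simp only [probReal_univ, add_sub_cancel_right] at h0 ⊢
    rw [EReal.coe_ennreal_ofReal, max_eq_left h0]
  · have : InformationTheory.klDiv μ ν = ⊤ := by
      rw [InformationTheory.klDiv_eq_top_iff]
      exact fun h1 h2 => h ⟨h1, h2⟩
    rw [this]; rfl

lemma kl_map_equiv {α β : Type*} [MeasurableSpace α] [MeasurableSpace β] (μ ν : Measure α)
    [IsFiniteMeasure μ] [IsFiniteMeasure ν] (e : α ≃ᵐ β) :
    InformationTheory.klDiv (μ.map e) (ν.map e) = InformationTheory.klDiv μ ν := by
  apply le_antisymm (InformationTheory.klDiv_map_le μ ν e.measurable)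
  have := InformationTheory.klDiv_map_le (μ.map e) (ν.map e) e.symm.measurable
  simpa [Measure.map_map e.symm.measurable e.measurable] using this

lemma kl_prod_ge {α β : Type*} [MeasurableSpace α] [MeasurableSpace β] [StandardBorelSpace β]
    [Nonempty β] (ρ : Measure (α × β)) (Q : Measure α) (R : Measure β)
    [IsProbabilityMeasure ρ] [IsProbabilityMeasure Q] [IsProbabilityMeasure R] :
    InformationTheory.klDiv ρ.fst Q + InformationTheory.klDiv ρ.snd R
      ≤ InformationTheory.klDiv ρ (Q.prod R) := by
  have h1 := InformationTheory.klDiv_compProd_eq_add ρ.fst Q ρ.condKernel (Kernel.const α R)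
  rw [ρ.disintegrate ρ.condKernel, Measure.compProd_const, Measure.compProd_const] at h1
  rw [h1]
  gcongr
  have h2 := InformationTheory.klDiv_map_le ρ (ρ.fst.prod R) measurable_snd
  have h3 : (ρ.fst.prod R).map Prod.snd = R := by
    have := Measure.snd_prod (μ := ρ.fst) (ν := R)
    rwa [Measure.snd] at this
  rwa [h3] at h2

lemma kl_prod_eq {α β : Type*} [MeasurableSpace α] [MeasurableSpace β]
    (μ Q : Measure α) (ν R : Measure β)
    [IsProbabilityMeasure μ] [IsProbabilityMeasure Q]
    [IsProbabilityMeasure ν] [IsProbabilityMeasure R] :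
    InformationTheory.klDiv (μ.prod ν) (Q.prod R)
      = InformationTheory.klDiv μ Q + InformationTheory.klDiv ν R := by
  have h1 := InformationTheory.klDiv_compProd_eq_add μ Q (Kernel.const α ν) (Kernel.const α R)
  simp only [Measure.compProd_const] at h1
  rw [h1]
  congr 1
  rw [← kl_map_equiv _ _ MeasurableEquiv.prodComm]
  have h2 := InformationTheory.klDiv_compProd_left ν R (Kernel.const β μ)
  simp only [Measure.compProd_const] at h2
  rw [← h2]
  congr 1
  · exact Measure.prod_swap
  · exact Measure.prod_swap

lemma kl_pi_eq (Q ν : Measure ℝ) [IsProbabilityMeasure Q] [IsProbabilityMeasure ν] (n : ℕ) :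
    InformationTheory.klDiv (Measure.pi fun _ : Fin n => ν) (Measure.pi fun _ : Fin n => Q)
      = n * InformationTheory.klDiv ν Q := by
  induction n with
  | zero =>
    rw [Measure.pi_of_empty, Measure.pi_of_empty]
    simp [InformationTheory.klDiv_self]
  | succ n ih =>
    rw [← kl_map_equiv _ _ (MeasurableEquiv.piFinSuccAbove (fun _ : Fin (n+1) => ℝ) 0),
      (measurePreserving_piFinSuccAbove (fun _ : Fin (n+1) => ν) 0).map_eq,
      (measurePreserving_piFinSuccAbove (fun _ : Fin (n+1) => Q) 0).map_eq, kl_prod_eq, ih]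
    push_cast
    ring

lemma kl_pi_ge (Q : Measure ℝ) [IsProbabilityMeasure Q] (n : ℕ) (ρ : Measure (Fin n → ℝ))
    [IsProbabilityMeasure ρ] :
    ∑ i, InformationTheory.klDiv (ρ.map fun x => x i) Q
      ≤ InformationTheory.klDiv ρ (Measure.pi fun _ : Fin n => Q) := by
  induction n with
  | zero => simp
  | succ n ih =>
    let e := MeasurableEquiv.piFinSuccAbove (fun _ : Fin (n+1) => ℝ) 0
    have : IsProbabilityMeasure (ρ.map e) :=
      Measure.isProbabilityMeasure_map e.measurable.aemeasurable
    rw [← kl_map_equiv _ _ e,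
      (measurePreserving_piFinSuccAbove (fun _ : Fin (n+1) => Q) 0).map_eq]
    refine le_trans ?_ (kl_prod_ge _ _ _)
    rw [Fin.sum_univ_succ]
    have h1 : (ρ.map e).fst = ρ.map fun x => x 0 := by
      rw [Measure.fst, Measure.map_map measurable_fst e.measurable]
      rfl
    rw [h1]
    gcongr
    refine le_trans (le_of_eq ?_) (ih _)
    refine Finset.sum_congr rfl fun i _ => ?_
    rw [Measure.snd, Measure.map_map measurable_snd e.measurable,
      Measure.map_map (measurable_pi_apply i) (measurable_snd.comp e.measurable)]
    rfl

instance (n : ℕ) : IsProbabilityMeasure (stdGaussianPi n) := by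
  unfold stdGaussianPi; infer_instance

/-- Law of `X + Z`. -/
noncomputable def cv (n : ℕ) (μ : Measure (Fin n → ℝ)) : Measure (Fin n → ℝ) :=
  (μ.prod (stdGaussianPi n)).map fun p => p.1 + p.2

instance (n : ℕ) (μ : Measure (Fin n → ℝ)) [IsProbabilityMeasure μ] :
    IsProbabilityMeasure (cv n μ) :=
  Measure.isProbabilityMeasure_map (by fun_prop)

lemma map_const_fin_one (Q : Measure ℝ) [IsProbabilityMeasure Q] :
    Q.map (fun x (_ : Fin 1) => x) = Measure.pi fun _ : Fin 1 => Q := by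
  symm
  refine Measure.pi_eq fun s hs => ?_
  rw [Measure.map_apply (by fun_prop) (MeasurableSet.univ_pi hs)]
  simp [Set.pi, Set.preimage]

lemma pi_map_coord (Q : Measure ℝ) [IsProbabilityMeasure Q] (n : ℕ) (i : Fin n) :
    (Measure.pi fun _ : Fin n => Q).map (fun x => x i) = Q :=
  (measurePreserving_eval (fun _ : Fin n => Q) i).map_eq

lemma pi_map_coord_one (Q : Measure ℝ) [IsProbabilityMeasure Q] (n : ℕ) (i : Fin n) :
    (Measure.pi fun _ : Fin n => Q).map (fun x (_ : Fin 1) => x i)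
      = Measure.pi fun _ : Fin 1 => Q := by
  rw [← map_const_fin_one]
  conv_rhs => rw [← pi_map_coord Q n i]
  rw [Measure.map_map (by fun_prop) (by fun_prop)]
  rfl

lemma cv_map (n : ℕ) (μ : Measure (Fin n → ℝ)) [IsProbabilityMeasure μ] (i : Fin n) :
    cv 1 (μ.map fun x _ => x i) = ((cv n μ).map fun x => x i).map (fun x (_ : Fin 1) => x) := by
  have h : stdGaussianPi 1 = (stdGaussianPi n).map (fun x _ => x i) :=
    (pi_map_coord_one _ n i).symm
  unfold cv
  rw [h, Measure.map_prod_map _ _ (by fun_prop) (by fun_prop),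
    Measure.map_map (by fun_prop) (by fun_prop), Measure.map_map (by fun_prop) (by fun_prop),
    Measure.map_map (by fun_prop) (by fun_prop)]
  rfl

lemma cv_pi (n : ℕ) (ν : Measure ℝ) [IsProbabilityMeasure ν] :
    cv n (Measure.pi fun _ => ν)
      = Measure.pi fun _ => (ν.prod (gaussianReal 0 1)).map fun p => p.1 + p.2 := by
  have : IsProbabilityMeasure ((ν.prod (gaussianReal 0 1)).map fun p => p.1 + p.2) :=
    Measure.isProbabilityMeasure_map (by fun_prop)
  unfold cv stdGaussianPi
  rw [← Measure.pi_map_pi (μ := fun _ : Fin n => ν.prod (gaussianReal 0 1))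
      (f := fun _ p => p.1 + p.2) (fun _ => by fun_prop),
    ← (measurePreserving_arrowProdEquivProdArrow ℝ ℝ (Fin n) (fun _ => ν)
      (fun _ => gaussianReal 0 1)).map_eq,
    Measure.map_map (by fun_prop) (MeasurableEquiv.measurable _)]
  rfl

lemma cv_one_map (μ : Measure (Fin 1 → ℝ)) [IsProbabilityMeasure μ] :
    (cv 1 μ).map (fun x => x 0)
      = ((μ.map fun x => x 0).prod (gaussianReal 0 1)).map fun p => p.1 + p.2 := by
  have h : (stdGaussianPi 1).map (fun x => x 0) = gaussianReal 0 1 := pi_map_coord _ 1 0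
  rw [← h, Measure.map_prod_map _ _ (by fun_prop) (by fun_prop)]
  unfold cv
  rw [Measure.map_map (by fun_prop) (by fun_prop), Measure.map_map (by fun_prop) (by fun_prop)]
  rfl

/-- ENNReal version of the objective. -/
noncomputable def uE (n : ℕ) (A P : ℝ) : ENNReal :=
  ⨅ μ ∈ {μ : Measure (Fin n → ℝ) | IsProbabilityMeasure μ ∧ μ {x | ∃ j, A < |x j|} = 0},
    InformationTheory.klDiv (cv n μ) (Measure.pi fun _ : Fin n => gaussianReal 0 (1 + P).toNNReal)

lemma gc_coe : GaloisConnection EReal.toENNReal (fun x : ENNReal => (x : EReal)) := by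
  intro x y
  rw [← EReal.coe_ennreal_le_coe_ennreal_iff, EReal.coe_toENNReal_eq_max, max_le_iff]
  exact ⟨fun h => h.2, fun h => ⟨EReal.coe_ennreal_nonneg y, h⟩⟩

lemma uIproj_eq (n : ℕ) (A P : ℝ) : uIproj n A P = (uE n A P : EReal) := by
  unfold uE uIproj
  rw [gc_coe.u_iInf₂]
  refine iInf_congr fun μ => iInf_congr fun hμ => ?_
  have := hμ.1
  exact klDiv_eq_coe (cv n μ) _

lemma uE_ge (A P : ℝ) (n : ℕ) : n * uE 1 A P ≤ uE n A P := by
  refine le_iInf₂ fun μ hμ => ?_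
  have := hμ.1
  refine le_trans ?_ (kl_pi_ge _ n _)
  have : ∀ i : Fin n, uE 1 A P ≤ InformationTheory.klDiv ((cv n μ).map fun x => x i)
      (gaussianReal 0 (1 + P).toNNReal) := by
    intro i
    have : IsProbabilityMeasure ((cv n μ).map fun x => x i) :=
      Measure.isProbabilityMeasure_map (Measurable.aemeasurable (by fun_prop))
    refine le_trans (iInf₂_le (μ.map fun x _ => x i)
      ⟨Measure.isProbabilityMeasure_map (Measurable.aemeasurable (by fun_prop)), ?_⟩) ?_
    rotate_left
    · rw [Measure.map_apply (by fun_prop)]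
      · refine measure_mono_null ?_ hμ.2
        rintro x ⟨j, hj⟩
        exact ⟨i, hj⟩
      · simp only [Set.ofPred_exists]
        exact MeasurableSet.iUnion fun j => measurableSet_lt (by fun_prop) (by fun_prop)
    · rw [cv_map, ← map_const_fin_one]
      exact InformationTheory.klDiv_map_le _ _ (by fun_prop)
  calc (n : ENNReal) * uE 1 A P = ∑ _i : Fin n, uE 1 A P := by simp
    _ ≤ _ := Finset.sum_le_sum fun i _ => this i

lemma uE_le (A P : ℝ) (n : ℕ) (h1n : 1 ≤ n) : uE n A P ≤ n * uE 1 A P := by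
  have hn : (n : ENNReal) ≠ ⊤ := ENNReal.natCast_ne_top n
  have key : ∀ μ ∈ {μ : Measure (Fin 1 → ℝ) |
      IsProbabilityMeasure μ ∧ μ {x | ∃ j, A < |x j|} = 0},
      uE n A P ≤ n * InformationTheory.klDiv (cv 1 μ)
        (Measure.pi fun _ : Fin 1 => gaussianReal 0 (1 + P).toNNReal) := by
    intro μ hμ
    have := hμ.1
    have : IsProbabilityMeasure (μ.map fun x => x 0) :=
      Measure.isProbabilityMeasure_map (Measurable.aemeasurable (by fun_prop))
    have : IsProbabilityMeasure ((cv 1 μ).map fun x => x 0) :=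
      Measure.isProbabilityMeasure_map (Measurable.aemeasurable (by fun_prop))
    refine le_trans (iInf₂_le (Measure.pi fun _ : Fin n => μ.map fun x => x 0)
      ⟨inferInstance, ?_⟩) ?_
    rotate_left
    · rw [Set.ofPred_exists]
      refine measure_iUnion_null fun j => ?_
      have hm : MeasurableSet {y : ℝ | A < |y|} := measurableSet_lt (by fun_prop) (by fun_prop)
      have h1 := pi_map_coord (μ.map fun x => x 0) n j
      have h2 : (Measure.pi fun _ : Fin n => μ.map fun x => x 0) {x | A < |x j|}
          = (μ.map fun x => x 0) {y : ℝ | A < |y|} := by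
        conv_rhs => rw [← h1]
        rw [Measure.map_apply (by fun_prop) hm]
        rfl
      rw [h2, Measure.map_apply (by fun_prop) hm]
      refine measure_mono_null ?_ hμ.2
      intro x hx
      exact ⟨0, hx⟩
    · rw [cv_pi, ← cv_one_map, kl_pi_eq]
      gcongr
      conv_lhs => rw [← pi_map_coord (gaussianReal 0 (1 + P).toNNReal) 1 0]
      exact InformationTheory.klDiv_map_le _ _ (by fun_prop)
  have h0' : (n : ENNReal) ≠ 0 := by exact_mod_cast (by omega : n ≠ 0)
  unfold uE at key ⊢
  rw [mul_comm, ← ENNReal.div_le_iff h0' hn]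
  refine le_iInf₂ fun μ hμ => ?_
  rw [ENNReal.div_le_iff h0' hn, mul_comm]
  exact key μ hμ

end Helpers

/-- Single-letterization of the `I`-projection: `u_n(A) = n · u_1(A)`. -/
theorem iproj_single_letterization
    (A P : ℝ) (hA : 0 < A) (hP : 0 < P) (n : ℕ) (hn : 1 ≤ n) :
    uIproj n A P = (n : EReal) * uIproj 1 A P := by
  rw [uIproj_eq, uIproj_eq, le_antisymm (uE_le A P n hn) (uE_ge A P n), EReal.coe_ennreal_mul]
  congr 1
end

section
/- Let P be a probability measure on ℝ^n with coordinate marginals P_1, …, P_n, and let Q = Q_1 ⊗ ⋯ ⊗ Q_n be a product probability measure on ℝ^n. Then the Kullback–Leibler divergence satisfies the superadditivity property D(P ‖ Q) ≥ ∑_{i=1}^n D(P_i ‖ Q_i). -/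
open MeasureTheory ProbabilityTheory

/-- Superadditivity of relative entropy: if `P` is a probability measure on
`ℝ^n` with coordinate marginals `P_i = P ∘ (eval i)⁻¹` and `Q = ⊗_i Q_i` is a product
probability measure, then `D(P ‖ Q) ≥ ∑ i, D(P_i ‖ Q_i)`. -/
theorem klDiv_superadditive_of_product_reference
    (n : ℕ) (P : Measure (Fin n → ℝ)) [IsProbabilityMeasure P]
    (Q : Fin n → Measure ℝ) [∀ i, IsProbabilityMeasure (Q i)] :
    ∑ i : Fin n, klDiv (P.map fun x => x i) (Q i) ≤ klDiv P (Measure.pi Q) := by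
  classical
  by_cases h : P ≪ Measure.pi Q ∧ Integrable (llr P (Measure.pi Q)) P
  swap
  · rw [klDiv, if_neg h]; exact le_top
  obtain ⟨hac, hllr⟩ := h
  have hmeas : ∀ i : Fin n, Measurable (fun x : Fin n → ℝ => x i) := fun i => measurable_pi_apply i
  have hQmap : ∀ i : Fin n, (Measure.pi Q).map (fun x : Fin n → ℝ => x i) = Q i :=
    fun i => (measurePreserving_eval Q i).map_eq
  have hP : ∀ i, IsProbabilityMeasure (P.map fun x : Fin n → ℝ => x i) :=
    fun i => Measure.isProbabilityMeasure_map (hmeas i).aemeasurable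
  have haci : ∀ i, (P.map fun x : Fin n → ℝ => x i) ≪ Q i := fun i => by
    have := hac.map (hmeas i)
    rwa [hQmap] at this
  have hllrs : ∀ i, Integrable (llr (P.map fun x : Fin n → ℝ => x i) (Q i))
      (P.map fun x : Fin n → ℝ => x i) := fun i => by
    have := InformationTheory.integrable_llr_map hac (hmeas i) hllr
    rwa [hQmap] at this
  have hllrc : ∀ i, Integrable
      (fun x => llr (P.map fun x : Fin n → ℝ => x i) (Q i) (x i)) P := fun i =>
    (hllrs i).comp_measurable (hmeas i)
  have e1 : ∀ i, klDiv (P.map fun x : Fin n → ℝ => x i) (Q i) =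
      ((∫ x, llr (P.map fun x : Fin n → ℝ => x i) (Q i) (x i) ∂P : ℝ) : EReal) := fun i => by
    rw [klDiv, if_pos ⟨haci i, hllrs i⟩,
      integral_map (hmeas i).aemeasurable (hllrs i).aestronglyMeasurable]
  rw [klDiv, if_pos ⟨hac, hllr⟩, Finset.sum_congr rfl (fun i _ => e1 i)]
  have hcoe : ∀ (s : Finset (Fin n)) (g : Fin n → ℝ),
      ∑ i ∈ s, ((g i : ℝ) : EReal) = ((∑ i ∈ s, g i : ℝ) : EReal) := by
    intro s g
    induction s using Finset.induction_on with
    | empty => simp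
    | insert a s ha ih => rw [Finset.sum_insert ha, Finset.sum_insert ha, ih, EReal.coe_add]
  rw [hcoe, EReal.coe_le_coe_iff,
    ← integral_finsetSum _ (fun i _ => hllrc i)]
  set F := P.rnDeriv (Measure.pi Q) with hF
  set f : ∀ _ : Fin n, ℝ → ENNReal :=
    fun i => (P.map fun x : Fin n → ℝ => x i).rnDeriv (Q i) with hf
  have hfm : ∀ i, Measurable (f i) := fun i => Measure.measurable_rnDeriv _ _
  let G : (Fin n → ℝ) → ENNReal := fun x => ∏ i, f i (x i)
  have hGm : Measurable G :=
    Finset.measurable_prod _ (fun i _ => (hfm i).comp (hmeas i))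
  have hFm : Measurable F := Measure.measurable_rnDeriv _ _
  have hG1 : ∫⁻ x, G x ∂(Measure.pi Q) = 1 := by
    have hprod := lintegral_prod_eq_prod_lintegral_of_indepFun Finset.univ
      (fun i (x : Fin n → ℝ) => f i (x i))
      (iIndepFun_pi (μ := Q) (fun i => (hfm i).aemeasurable))
      (fun i => (hfm i).comp (hmeas i))
    refine hprod.trans (Finset.prod_eq_one fun i _ => ?_)
    rw [(measurePreserving_eval Q i).lintegral_comp (hfm i), hf, Measure.lintegral_rnDeriv (haci i)]
    exact measure_univ
  have hGFm : Measurable (fun x => G x / F x) := hGm.div hFm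
  have hGF : ∫⁻ x, G x / F x ∂P ≤ 1 := by
    rw [← lintegral_rnDeriv_mul hac hGFm.aemeasurable, ← hG1]
    exact lintegral_mono fun x => ENNReal.mul_div_le
  have hGFne : ∫⁻ x, G x / F x ∂P ≠ ⊤ := (hGF.trans_lt ENNReal.one_lt_top).ne
  have hGFi : Integrable (fun x => (G x / F x).toReal) P :=
    integrable_toReal_of_lintegral_ne_top hGFm.aemeasurable hGFne
  have hGFle : ∫ x, (G x / F x).toReal ∂P ≤ 1 := by
    rw [integral_toReal hGFm.aemeasurable
      (ae_lt_top hGFm hGFne)]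
    exact ENNReal.toReal_le_of_le_ofReal zero_le_one (by simpa using hGF)
  have hFpos : ∀ᵐ x ∂P, 0 < F x := Measure.rnDeriv_pos hac
  have hFtop : ∀ᵐ x ∂P, F x < ⊤ := hac.ae_le (Measure.rnDeriv_lt_top P (Measure.pi Q))
  have hfpos : ∀ᵐ x ∂P, ∀ i, 0 < f i (x i) := by
    rw [ae_all_iff]
    exact fun i => ae_of_ae_map (hmeas i).aemeasurable (Measure.rnDeriv_pos (haci i))
  have hftop : ∀ᵐ x ∂P, ∀ i, f i (x i) < ⊤ := by
    rw [ae_all_iff]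
    exact fun i => ae_of_ae_map (hmeas i).aemeasurable
      ((haci i).ae_le (Measure.rnDeriv_lt_top _ (Q i)))
  have key : ∀ᵐ x ∂P, ∑ i, llr (P.map fun x : Fin n → ℝ => x i) (Q i) (x i) ≤
      llr P (Measure.pi Q) x + ((G x / F x).toReal - 1) := by
    filter_upwards [hFpos, hFtop, hfpos, hftop] with x h1 h2 h3 h4
    have a1 : 0 < (F x).toReal := ENNReal.toReal_pos h1.ne' h2.ne
    have a2 : ∀ i, 0 < (f i (x i)).toReal := fun i => ENNReal.toReal_pos (h3 i).ne' (h4 i).ne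
    have a3 : (G x).toReal = ∏ i, (f i (x i)).toReal := ENNReal.toReal_prod _ _
    have a4 : 0 < (G x).toReal := a3 ▸ Finset.prod_pos fun i _ => a2 i
    have a5 : ∑ i, llr (P.map fun x : Fin n → ℝ => x i) (Q i) (x i) = Real.log (G x).toReal := by
      rw [a3, Real.log_prod (fun i _ => (a2 i).ne')]
      rfl
    have a6 : llr P (Measure.pi Q) x = Real.log (F x).toReal := rfl
    have a7 := Real.log_le_sub_one_of_pos (div_pos a4 a1)
    rw [Real.log_div a4.ne' a1.ne'] at a7
    rw [a5, a6, ENNReal.toReal_div]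
    linarith
  have hsub : Integrable (fun x => (G x / F x).toReal - 1) P := hGFi.sub (integrable_const 1)
  calc _ ≤ ∫ x, (llr P (Measure.pi Q) x + ((G x / F x).toReal - 1)) ∂P :=
        integral_mono_ae (integrable_finsetSum _ fun i _ => hllrc i) (hllr.add hsub) key
    _ = ∫ x, llr P (Measure.pi Q) x ∂P + (∫ x, (G x / F x).toReal ∂P - 1) := by
        rw [integral_add hllr hsub, integral_sub hGFi (integrable_const 1)]
        simp
    _ ≤ _ := by linarith
end

section
/- Let P > 0, let X be a real random variable with E[X²] ≤ P, and let Z ~ N(0,1) be independent of X. Then D( P_{X+Z} ‖ N(0, 1+P) ) ≤ (1/2) ln(1+P) − I(X; X+Z), where I(X; X+Z) is the mutual information between X and X+Z. -/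
open MeasureTheory ProbabilityTheory

/-- The mutual information `I(X; Y)` of two real random variables: the KL divergence between
the joint law of `(X, Y)` and the product of its marginals. -/
noncomputable def mutInfoRV {Ω : Type*} [MeasureSpace Ω] (X Y : Ω → ℝ) : EReal :=
  klDiv (Measure.map (fun ω => (X ω, Y ω)) ℙ)
    ((Measure.map (fun ω => (X ω, Y ω)) ℙ).fst.prod (Measure.map (fun ω => (X ω, Y ω)) ℙ).snd)

/-- Chain rule: the divergence splits into output divergence plus mutual information. -/
lemma klDiv_add_mutInfo_le (J : Measure (ℝ × ℝ)) [IsProbabilityMeasure J]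
    (G : Measure ℝ) [IsProbabilityMeasure G] :
    InformationTheory.klDiv J.snd G + InformationTheory.klDiv J (J.fst.prod J.snd) ≤
      InformationTheory.klDiv J (J.fst.prod G) := by
  have hJ : IsProbabilityMeasure (J.map Prod.swap) :=
    Measure.isProbabilityMeasure_map (by fun_prop)
  have h1 := InformationTheory.klDiv_map_le J (J.fst.prod G) measurable_swap
  have h2 := InformationTheory.klDiv_map_le (J.map Prod.swap) (J.snd.prod J.fst) measurable_swap
  rw [Measure.prod_swap] at h1 h2
  rw [Measure.map_map measurable_swap measurable_swap, Prod.swap_swap_eq, Measure.map_id] at h2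
  have h3 := InformationTheory.klDiv_compProd_eq_add (J.map Prod.swap).fst G
    (J.map Prod.swap).condKernel (Kernel.const ℝ J.fst)
  rw [Measure.disintegrate, Measure.compProd_const, Measure.compProd_const,
    Measure.fst_map_swap] at h3
  rw [h3] at h1
  exact le_trans (by gcongr) h1

/-- The Gaussian density ratio. -/
noncomputable def gaussRatio (v : ℝ) (p : ℝ × ℝ) : ℝ :=
  √v * Real.exp (p.2 ^ 2 / (2 * v) - (p.2 - p.1) ^ 2 / 2)

lemma gaussRatio_pos {v : ℝ} (hv : 0 < v) (p : ℝ × ℝ) : 0 < gaussRatio v p := by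
  unfold gaussRatio; positivity

lemma measurable_gaussRatio (v : ℝ) : Measurable (gaussRatio v) := by
  unfold gaussRatio; fun_prop

lemma gaussianReal_eq_withDensity (x v : ℝ) (hv : 0 < v) :
    gaussianReal x 1 = (gaussianReal 0 v.toNNReal).withDensity
      (fun y => ENNReal.ofReal (gaussRatio v (x, y))) := by
  have hv' : v.toNNReal ≠ 0 := by simpa using hv
  have hm : Measurable (fun y => ENNReal.ofReal (gaussRatio v (x, y))) :=
    ((measurable_gaussRatio v).comp (by fun_prop)).ennreal_ofReal
  rw [gaussianReal_of_var_ne_zero _ one_ne_zero, gaussianReal_of_var_ne_zero _ hv',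
    ← withDensity_mul _ (measurable_gaussianPDF _ _) hm]
  congr 1
  ext y
  simp only [Pi.mul_apply, gaussianPDF]
  rw [← ENNReal.ofReal_mul (gaussianPDFReal_nonneg _ _ _)]
  congr 1
  simp only [gaussianPDFReal, gaussRatio, Real.coe_toNNReal v hv.le, NNReal.coe_one, mul_one,
    sub_zero]
  rw [Real.sqrt_mul (by positivity) v, mul_inv, mul_mul_mul_comm, ← Real.exp_add,
    inv_mul_cancel_right₀ (by positivity)]
  congr 2
  ring

lemma joint_eq_withDensity (μ : Measure ℝ) [IsProbabilityMeasure μ] (v : ℝ) (hv : 0 < v) :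
    (μ.prod (gaussianReal 0 1)).map (fun p : ℝ × ℝ => (p.1, p.1 + p.2)) =
      (μ.prod (gaussianReal 0 v.toNNReal)).withDensity
        (fun p => ENNReal.ofReal (gaussRatio v p)) := by
  have hm : Measurable (fun p => ENNReal.ofReal (gaussRatio v p)) :=
    (measurable_gaussRatio v).ennreal_ofReal
  ext s hs
  rw [Measure.map_apply (by fun_prop) hs, Measure.prod_apply (hs.preimage (by fun_prop)),
    withDensity_apply _ hs, ← lintegral_indicator hs, lintegral_prod _
      (hm.indicator hs).aemeasurable]
  congr 1
  ext x
  have h1 : Prod.mk x ⁻¹' ((fun p : ℝ × ℝ => (p.1, p.1 + p.2)) ⁻¹' s) =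
      (fun z => x + z) ⁻¹' (Prod.mk x ⁻¹' s) := rfl
  have hs' : MeasurableSet (Prod.mk x ⁻¹' s) := hs.preimage (by fun_prop)
  rw [h1, ← Measure.map_apply (by fun_prop) hs', gaussianReal_map_const_add, zero_add,
    gaussianReal_eq_withDensity x v hv, withDensity_apply _ hs', ← lintegral_indicator hs']
  rfl

/-- Let `P > 0`, `X` a real random variable with `E[X²] ≤ P`, and
`Z ~ N(0,1)` independent of `X`. Then
`D(P_{X+Z} ‖ N(0,1+P)) ≤ (1/2) ln(1+P) - I(X; X+Z)`. -/
theorem klDiv_output_le_capacity_sub_mutualInfo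
    {Ω : Type*} [MeasureSpace Ω] [IsProbabilityMeasure (ℙ : Measure Ω)]
    (P : ℝ) (hP : 0 < P)
    (X Z : Ω → ℝ) (hX : Measurable X) (hZ : Measurable Z)
    (hindep : IndepFun X Z ℙ)
    (hZlaw : Measure.map Z ℙ = gaussianReal 0 1)
    (hX2int : Integrable (fun ω => (X ω) ^ 2) ℙ)
    (hX2 : ∫ ω, (X ω) ^ 2 ∂ℙ ≤ P) :
    klDiv (Measure.map (fun ω => X ω + Z ω) ℙ) (gaussianReal 0 (1 + P).toNNReal) ≤
      (((1 / 2) * Real.log (1 + P) : ℝ) : EReal) - mutInfoRV X (fun ω => X ω + Z ω) := by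
  have hv : 0 < 1 + P := by linarith
  set G := gaussianReal 0 (1 + P).toNNReal with hG
  set J := Measure.map (fun ω => (X ω, X ω + Z ω)) (ℙ : Measure Ω) with hJ
  have hJm : Measurable (fun ω => (X ω, X ω + Z ω)) := by fun_prop
  have hJp : IsProbabilityMeasure J := Measure.isProbabilityMeasure_map hJm.aemeasurable
  have hμp : IsProbabilityMeasure (Measure.map X (ℙ : Measure Ω)) :=
    Measure.isProbabilityMeasure_map hX.aemeasurable
  have hfst : J.fst = Measure.map X ℙ := by
    rw [hJ, Measure.fst_map_prodMk (by fun_prop)]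
  have hsnd : J.snd = Measure.map (fun ω => X ω + Z ω) ℙ := by
    rw [hJ, Measure.snd_map_prodMk hX]
  have hJd : J = (J.fst.prod G).withDensity (fun p => ENNReal.ofReal (gaussRatio (1 + P) p)) := by
    rw [hfst, ← joint_eq_withDensity _ _ hv, ← hZlaw,
      ← hindep.map_prod_eq_prod_map_map hX.aemeasurable hZ.aemeasurable,
      Measure.map_map (by fun_prop) (by fun_prop)]
    rfl
  have hac : J ≪ J.fst.prod G := by
    conv_lhs => rw [hJd]
    exact withDensity_absolutelyContinuous _ _
  have hrn : J.rnDeriv (J.fst.prod G) =ᵐ[J]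
      fun p => ENNReal.ofReal (gaussRatio (1 + P) p) := by
    apply hac.ae_eq
    have := Measure.rnDeriv_withDensity (J.fst.prod G)
      (measurable_gaussRatio (1 + P)).ennreal_ofReal
    rwa [← hJd] at this
  have hllr : llr J (J.fst.prod G) =ᵐ[J] fun p => 1 / 2 * Real.log (1 + P) +
      (p.2 ^ 2 / (2 * (1 + P)) - (p.2 - p.1) ^ 2 / 2) := by
    filter_upwards [hrn] with p hp
    rw [llr, hp, ENNReal.toReal_ofReal (gaussRatio_pos hv p).le, gaussRatio,
      Real.log_mul (by positivity) (by positivity), Real.log_exp, Real.log_sqrt hv.le]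
    ring
  -- moments
  have hZ2 : MemLp Z 2 ℙ := by
    have h := memLp_id_gaussianReal' (μ := 0) (v := 1) 2 (by simp)
    rw [← hZlaw] at h
    exact (memLp_map_measure_iff (by fun_prop) hZ.aemeasurable).1 h
  have hX2' : MemLp X 2 ℙ := (memLp_two_iff_integrable_sq hX.aestronglyMeasurable).2 hX2int
  have hZsq : Integrable (fun ω => Z ω ^ 2) ℙ := hZ2.integrable_sq
  have hXZ : Integrable (fun ω => X ω * Z ω) ℙ := hX2'.integrable_mul hZ2
  have hEZ : ∫ ω, Z ω ∂ℙ = 0 := by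
    have h := integral_id_gaussianReal (μ := 0) (v := 1)
    rw [← hZlaw, integral_map hZ.aemeasurable (by fun_prop)] at h
    exact h
  have hEZ2 : ∫ ω, Z ω ^ 2 ∂ℙ = 1 := by
    have h := variance_fun_id_gaussianReal (μ := 0) (v := 1)
    rw [variance_of_integral_eq_zero (by fun_prop) (by simp), ← hZlaw,
      integral_map hZ.aemeasurable (by fun_prop)] at h
    simpa using h
  have hEXZ : ∫ ω, X ω * Z ω ∂ℙ = 0 := by
    rw [hindep.integral_fun_mul_eq_mul_integral hX.aestronglyMeasurable hZ.aestronglyMeasurable,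
      hEZ, mul_zero]
  have hfun : (fun ω => 1 / 2 * Real.log (1 + P) +
      ((X ω + Z ω) ^ 2 / (2 * (1 + P)) - (X ω + Z ω - X ω) ^ 2 / 2)) =
      fun ω => 1 / 2 * Real.log (1 + P) + ((1 / (2 * (1 + P))) * X ω ^ 2 +
        ((1 / (1 + P)) * (X ω * Z ω) + (1 / (2 * (1 + P)) - 1 / 2) * Z ω ^ 2)) := by
    ext ω
    field_simp
    ring
  have i1 := hX2int.const_mul (1 / (2 * (1 + P)))
  have i2 := hXZ.const_mul (1 / (1 + P))
  have i3 := hZsq.const_mul (1 / (2 * (1 + P)) - 1 / 2)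
  have i5 : Integrable (fun ω => (1 / (1 + P)) * (X ω * Z ω) +
      (1 / (2 * (1 + P)) - 1 / 2) * Z ω ^ 2) ℙ := i2.add i3
  have i4 : Integrable (fun ω => (1 / (2 * (1 + P))) * X ω ^ 2 +
      ((1 / (1 + P)) * (X ω * Z ω) + (1 / (2 * (1 + P)) - 1 / 2) * Z ω ^ 2)) ℙ := i1.add i5
  have i0 : Integrable (fun _ : Ω => 1 / 2 * Real.log (1 + P)) ℙ := integrable_const _
  have hint : Integrable (llr J (J.fst.prod G)) J := by
    rw [integrable_congr hllr, hJ, integrable_map_measure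
      (Measurable.aestronglyMeasurable (by fun_prop)) hJm.aemeasurable]
    change Integrable (fun ω => 1 / 2 * Real.log (1 + P) +
      ((X ω + Z ω) ^ 2 / (2 * (1 + P)) - (X ω + Z ω - X ω) ^ 2 / 2)) ℙ
    rw [hfun]
    exact i0.add (i1.add (i2.add i3))
  have hval : ∫ p, llr J (J.fst.prod G) p ∂J ≤ 1 / 2 * Real.log (1 + P) := by
    rw [integral_congr_ae hllr, hJ, integral_map hJm.aemeasurable
      (Measurable.aestronglyMeasurable (by fun_prop))]
    simp only []
    rw [hfun, integral_add i0 i4, integral_add i1 i5,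
      integral_add i2 i3, integral_const_mul, integral_const_mul, integral_const_mul, integral_const_mul,
      hEXZ, hEZ2, integral_const]
    simp only [probReal_univ, one_smul, mul_zero, zero_add, mul_one]
    have : 1 / (2 * (1 + P)) * ∫ ω, X ω ^ 2 ∂ℙ ≤ 1 / (2 * (1 + P)) * P := by gcongr
    have h2 : 1 / (2 * (1 + P)) * P + (1 / (2 * (1 + P)) - 1 / 2) = 0 := by
      field_simp; ring
    linarith
  have hkl : InformationTheory.klDiv J (J.fst.prod G) ≤
      ENNReal.ofReal (1 / 2 * Real.log (1 + P)) := by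
    rw [InformationTheory.klDiv_of_ac_of_integrable hac hint]
    apply ENNReal.ofReal_le_ofReal
    simpa using hval
  have hfin := (klDiv_add_mutInfo_le J G).trans hkl
  have hnn : 0 ≤ 1 / 2 * Real.log (1 + P) := by
    have := Real.log_nonneg (show 1 ≤ 1 + P by linarith)
    positivity
  unfold mutInfoRV
  rw [← hJ, ← hsnd, klDiv_eq_coe, klDiv_eq_coe]
  have hE := EReal.coe_ennreal_le_coe_ennreal_iff.2 hfin
  rw [EReal.coe_ennreal_add, EReal.coe_ennreal_ofReal,
    max_eq_left (by exact_mod_cast hnn)] at hE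
  refine EReal.le_sub_iff_add_le (Or.inr (EReal.coe_ne_bot _)) (Or.inr (EReal.coe_ne_top _)) |>.2 hE
end
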